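/- Let n ≥ 1 and let d be a divisor of n. Then the row sum a_d(n) := ∑_{k|n} c_d(k) is a nonnegative real number; moreover a_d(n) = 0 if and only if n is even and n/d is odd. -/

import Mathlib

/-- The Ramanujan sum `c_d(r)`: the sum of the `r`-th powers of all primitive
`d`-th roots of unity. -/
noncomputable def ramanujanSum (d r : ℕ) : ℂ :=
  ∑ m ∈ (Finset.range d).filter (fun m => Nat.gcd m d = 1),
    Complex.exp (2 * Real.pi * Complex.I * ((m : ℂ) * (r : ℂ) / (d : ℂ)))

/-!
Summing `c_e(k)` over `e ∣ d` runs through all `d`-th roots of unity and gives `d` or `0` according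
to whether `d ∣ k`, so by Möbius inversion `c_d(k) = ∑_{e ∣ gcd(d, k)} μ(d/e) e` and
`a_d(n) = ∑_{e ∣ d} μ(d/e) e τ(n/e)`. This is multiplicative in the pair `(n, d)`. At `d = 1` it is
`τ(n) > 0`, and at a prime power pair `(p^(b+1+t), p^(b+1))` it is `p^b ((p - 1)(t + 1) - 1)`, which
is nonnegative and vanishes only for `p = 2` and `t = 0`.
-/

open Finset ArithmeticFunction
open scoped ArithmeticFunction.Moebius ArithmeticFunction.sigma

section RootsOfUnity

variable {R : Type*} [CommRing R] [IsDomain R] {ζ : R} {n : ℕ}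

lemma sum_coprime_pow_eq_sum_primitiveRoots {M : Type*} [AddCommMonoid M] [NeZero n]
    (hζ : IsPrimitiveRoot ζ n) (f : R → M) :
    ∑ m ∈ range n with m.gcd n = 1, f (ζ ^ m) = ∑ z ∈ primitiveRoots n R, f z := by
  refine sum_nbij (ζ ^ ·) (fun m hm => ?_) (fun a ha b hb hab => ?_) (fun z hz => ?_)
    fun _ _ => rfl
  · rw [mem_primitiveRoots (NeZero.pos n)]
    exact hζ.pow_of_coprime m (mem_filter.1 hm).2
  · rw [mem_coe, mem_filter, mem_range] at ha hb
    exact hζ.pow_inj ha.1 hb.1 hab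
  · obtain ⟨m, hm, hcoprime, rfl⟩ :=
      hζ.isPrimitiveRoot_iff.1 (isPrimitiveRoot_of_mem_primitiveRoots hz)
    exact ⟨m, by simpa using ⟨hm, hcoprime⟩, rfl⟩

lemma sum_nthRootsFinset_pow (hζ : IsPrimitiveRoot ζ n) (r : ℕ) :
    ∑ z ∈ Polynomial.nthRootsFinset n (1 : R), z ^ r = if n ∣ r then (n : R) else 0 := by
  have sum_eq_geom_sum :
      ∑ z ∈ Polynomial.nthRootsFinset n (1 : R), z ^ r = ∑ i ∈ range n, (ζ ^ r) ^ i := by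
    classical
    rw [Polynomial.nthRootsFinset_def, ← Multiset.toFinset_eq hζ.nthRoots_one_nodup, sum_mk,
      hζ.nthRoots_eq (one_pow n), Multiset.map_map]
    exact congrArg Multiset.sum (Multiset.map_congr rfl fun i _ => by simp [pow_right_comm])
  rw [sum_eq_geom_sum]
  split_ifs with hr
  · simp [(hζ.pow_eq_one_iff_dvd r).2 hr]
  · have hne : 1 - ζ ^ r ≠ 0 := sub_ne_zero.2 fun h => hr ((hζ.pow_eq_one_iff_dvd r).1 h.symm)
    refine (mul_eq_zero.1 ?_).resolve_left hne
    rw [mul_neg_geom_sum, pow_right_comm, hζ.pow_eq_one, one_pow, sub_self]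

end RootsOfUnity

section RamanujanSum

lemma ramanujanSum_eq_sum_primitiveRoots (d r : ℕ) :
    ramanujanSum d r = ∑ z ∈ primitiveRoots d ℂ, z ^ r := by
  rcases eq_or_ne d 0 with rfl | hd
  · simp [ramanujanSum]
  have : NeZero d := ⟨hd⟩
  rw [← sum_coprime_pow_eq_sum_primitiveRoots (Complex.isPrimitiveRoot_exp d hd) (· ^ r)]
  refine sum_congr rfl fun m _ => ?_
  rw [← Complex.exp_nat_mul, ← Complex.exp_nat_mul]
  ring_nf

lemma sum_divisors_ramanujanSum {d : ℕ} (hd : d ≠ 0) (r : ℕ) :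
    ∑ e ∈ d.divisors, ramanujanSum e r = if d ∣ r then (d : ℂ) else 0 := by
  simp only [← sum_nthRootsFinset_pow (Complex.isPrimitiveRoot_exp d hd) r,
    IsPrimitiveRoot.nthRoots_one_eq_biUnion_primitiveRoots,
    sum_biUnion fun _ _ _ _ => IsPrimitiveRoot.disjoint, ramanujanSum_eq_sum_primitiveRoots]

lemma ramanujanSum_eq_sum_moebius (d r : ℕ) :
    ramanujanSum d r = ∑ e ∈ d.divisors with e ∣ r, (μ (d / e) : ℂ) * e := by
  rcases Nat.eq_zero_or_pos d with rfl | hd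
  · simp [ramanujanSum]
  rw [← sum_eq_iff_sum_mul_moebius_eq.1
    (fun e he => sum_divisors_ramanujanSum (Nat.ne_of_gt he) r) d hd,
    Nat.sum_divisorsAntidiagonal' fun x y => (μ x : ℂ) * if y ∣ r then (y : ℂ) else 0]
  simp only [mul_ite, mul_zero, sum_filter]

lemma card_divisors_filter_dvd {n e : ℕ} (he : e ∣ n) :
    #{k ∈ n.divisors | e ∣ k} = #(n / e).divisors := by
  rcases eq_or_ne n 0 with rfl | hn
  · simp
  have he0 : 0 < e := Nat.pos_of_dvd_of_pos he (Nat.pos_of_ne_zero hn)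
  have hne : n / e ≠ 0 := Nat.div_ne_zero_iff_of_dvd he |>.2 ⟨hn, he0.ne'⟩
  refine card_nbij' (· / e) (e * ·) (fun k hk => ?_) (fun k hk => ?_) (fun k hk => ?_)
    fun k _ => Nat.mul_div_cancel_left k he0
  · rw [mem_coe, mem_filter, Nat.mem_divisors] at hk
    exact Nat.mem_divisors.2 ⟨Nat.div_dvd_div hk.2 hk.1.1, hne⟩
  · rw [mem_coe, Nat.mem_divisors] at hk
    simpa [hn] using Nat.mul_dvd_of_dvd_div he hk.1
  · exact Nat.mul_div_cancel' (mem_filter.1 hk).2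

/-- The integer `∑_{e ∣ d} μ(d/e) e τ(n/e)`, which for `d ∣ n` is the row sum `∑_{k ∣ n} c_d(k)`;
for other `d` the truncated quotient `n / e` gives it no meaning. -/
def moebiusRowSum (n d : ℕ) : ℤ :=
  ∑ e ∈ d.divisors, μ (d / e) * (e * σ 0 (n / e))

lemma sum_ramanujanSum_eq_moebiusRowSum {n d : ℕ} (hd : d ∣ n) :
    ∑ k ∈ n.divisors, ramanujanSum d k = moebiusRowSum n d := by
  simp only [ramanujanSum_eq_sum_moebius, sum_filter, moebiusRowSum, Int.cast_sum, Int.cast_mul,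
    Int.cast_natCast]
  rw [sum_comm]
  refine sum_congr rfl fun e he => ?_
  have he : e ∣ n := (Nat.dvd_of_mem_divisors he).trans hd
  rw [← sum_filter, sum_const, card_divisors_filter_dvd he, nsmul_eq_mul, sigma_zero_apply]
  ring

end RamanujanSum

section Multiplicativity

lemma sum_divisors_mul_of_coprime {M : Type*} [AddCommMonoid M] {m n : ℕ} (h : m.Coprime n)
    (f : ℕ → M) :
    ∑ e ∈ (m * n).divisors, f e = ∑ a ∈ m.divisors, ∑ b ∈ n.divisors, f (a * b) := by
  rw [Nat.divisors_mul, ← image_mul_product, sum_image h.mul_injOn_divisors, sum_product]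

lemma sum_divisors_mul_mul_of_coprime {R : Type*} [CommSemiring R] {f g h : ArithmeticFunction R}
    (hf : f.IsMultiplicative) (hg : g.IsMultiplicative) (hh : h.IsMultiplicative)
    {n₁ n₂ d₁ d₂ : ℕ} (hn : n₁.Coprime n₂) (hd₁ : d₁ ∣ n₁) (hd₂ : d₂ ∣ n₂) :
    ∑ e ∈ (d₁ * d₂).divisors, f (d₁ * d₂ / e) * (g e * h (n₁ * n₂ / e)) =
      (∑ e ∈ d₁.divisors, f (d₁ / e) * (g e * h (n₁ / e))) *
        ∑ e ∈ d₂.divisors, f (d₂ / e) * (g e * h (n₂ / e)) := by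
  have hd : d₁.Coprime d₂ := hn.of_dvd hd₁ hd₂
  rw [sum_divisors_mul_of_coprime hd, sum_mul_sum]
  refine sum_congr rfl fun a ha => sum_congr rfl fun b hb => ?_
  have ha : a ∣ d₁ := Nat.dvd_of_mem_divisors ha
  have hb : b ∣ d₂ := Nat.dvd_of_mem_divisors hb
  have ha' : a ∣ n₁ := ha.trans hd₁
  have hb' : b ∣ n₂ := hb.trans hd₂
  rw [Nat.mul_div_mul_comm ha hb, Nat.mul_div_mul_comm ha' hb',
    hf.map_mul_of_coprime (hd.of_dvd (Nat.div_dvd_of_dvd ha) (Nat.div_dvd_of_dvd hb)),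
    hg.map_mul_of_coprime (hd.of_dvd ha hb),
    hh.map_mul_of_coprime (hn.of_dvd (Nat.div_dvd_of_dvd ha') (Nat.div_dvd_of_dvd hb'))]
  ring

lemma moebiusRowSum_mul {n₁ n₂ d₁ d₂ : ℕ} (hn : n₁.Coprime n₂) (hd₁ : d₁ ∣ n₁) (hd₂ : d₂ ∣ n₂) :
    moebiusRowSum (n₁ * n₂) (d₁ * d₂) = moebiusRowSum n₁ d₁ * moebiusRowSum n₂ d₂ := by
  simpa [moebiusRowSum] using sum_divisors_mul_mul_of_coprime isMultiplicative_moebius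
    isMultiplicative_id.natCast (isMultiplicative_sigma (k := 0)).natCast hn hd₁ hd₂

end Multiplicativity

section PrimePowers

lemma sum_divisors_prime_pow_moebius_div_mul {R : Type*} [Ring R] {p : ℕ} (hp : p.Prime) (k : ℕ)
    (f : ℕ → R) :
    ∑ e ∈ (p ^ (k + 1)).divisors, (μ (p ^ (k + 1) / e) : R) * f e =
      f (p ^ (k + 1)) - f (p ^ k) := by
  have vanish : ∑ i ∈ range k, (μ (p ^ (k + 1) / p ^ i) : R) * f (p ^ i) = 0 := by
    refine sum_eq_zero fun i hi => ?_
    rw [mem_range] at hi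
    rw [Nat.pow_div (by lia) hp.pos, moebius_apply_prime_pow hp (by lia), if_neg (by lia),
      Int.cast_zero, zero_mul]
  rw [Nat.sum_divisors_prime_pow hp, sum_range_succ, sum_range_succ, vanish,
    Nat.div_self (pow_pos hp.pos _), pow_succ p k,
    Nat.mul_div_cancel_left p (pow_pos hp.pos k), moebius_apply_prime hp, moebius_apply_one]
  simp [sub_eq_neg_add]

lemma moebiusRowSum_one_right (n : ℕ) : moebiusRowSum n 1 = #n.divisors := by
  simp [moebiusRowSum, sigma_zero_apply]

lemma moebiusRowSum_prime_pow {p : ℕ} (hp : p.Prime) (b t : ℕ) :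
    moebiusRowSum (p ^ (b + 1 + t)) (p ^ (b + 1)) = (p : ℤ) ^ b * ((p - 1) * (t + 1) - 1) := by
  have two_terms := sum_divisors_prime_pow_moebius_div_mul hp b
    fun e => (e * σ 0 (p ^ (b + 1 + t) / e) : ℤ)
  simp only [Int.cast_id] at two_terms
  rw [moebiusRowSum, two_terms, Nat.pow_div (by lia) hp.pos, Nat.pow_div (by lia) hp.pos,
    show b + 1 + t - (b + 1) = t by lia, show b + 1 + t - b = t + 1 by lia,
    sigma_zero_apply_prime_pow hp, sigma_zero_apply_prime_pow hp]
  push_cast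
  ring

end PrimePowers

section Positivity

lemma dvd_induction_on_coprime {P : ℕ → ℕ → Prop} (one : ∀ n, n ≠ 0 → P n 1)
    (prime_pow : ∀ p b t, p.Prime → P (p ^ (b + 1 + t)) (p ^ (b + 1)))
    (mul : ∀ n₁ n₂ d₁ d₂, n₁.Coprime n₂ → d₁ ∣ n₁ → d₂ ∣ n₂ → P n₁ d₁ → P n₂ d₂ →
      P (n₁ * n₂) (d₁ * d₂)) {n d : ℕ} (hn : n ≠ 0) (hd : d ∣ n) : P n d := by
  induction n using Nat.recOnPosPrimePosCoprime generalizing d with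
  | zero => contradiction
  | one => exact Nat.dvd_one.1 hd ▸ one 1 hn
  | prime_pow p a hp ha =>
    obtain ⟨_ | b, hb, rfl⟩ := (Nat.dvd_prime_pow hp).1 hd
    · exact one _ hn
    · obtain ⟨t, rfl⟩ := Nat.exists_eq_add_of_le hb
      exact prime_pow p b t hp
  | coprime n₁ n₂ _ _ hcoprime ih₁ ih₂ =>
    obtain ⟨d₁, d₂, hd₁, hd₂, rfl⟩ := exists_dvd_and_dvd_of_dvd_mul hd
    exact mul n₁ n₂ d₁ d₂ hcoprime hd₁ hd₂ (ih₁ (left_ne_zero_of_mul hn) hd₁)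
      (ih₂ (right_ne_zero_of_mul hn) hd₂)

lemma moebiusRowSum_nonneg {n d : ℕ} (hn : n ≠ 0) (hd : d ∣ n) : 0 ≤ moebiusRowSum n d := by
  refine dvd_induction_on_coprime (P := fun n d => 0 ≤ moebiusRowSum n d) (fun n _ => ?_)
    (fun p b t hp => ?_) (fun n₁ n₂ d₁ d₂ hn hd₁ hd₂ ih₁ ih₂ => ?_) hn hd
  · exact moebiusRowSum_one_right n ▸ Int.natCast_nonneg _
  · have hp1 : 0 < (p : ℤ) - 1 := by have := hp.two_le; lia
    have : 0 < ((p : ℤ) - 1) * (t + 1) := by positivity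
    rw [moebiusRowSum_prime_pow hp]
    exact mul_nonneg (by positivity) (by lia)
  · exact moebiusRowSum_mul hn hd₁ hd₂ ▸ mul_nonneg ih₁ ih₂

lemma moebiusRowSum_prime_pow_eq_zero_iff {p : ℕ} (hp : p.Prime) (b t : ℕ) :
    moebiusRowSum (p ^ (b + 1 + t)) (p ^ (b + 1)) = 0 ↔ p = 2 ∧ t = 0 := by
  have hp0 : (p : ℤ) ^ b ≠ 0 := pow_ne_zero b (Nat.cast_ne_zero.2 hp.ne_zero)
  rw [moebiusRowSum_prime_pow hp, mul_eq_zero, or_iff_right hp0, sub_eq_zero,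
    Int.mul_eq_one_iff_eq_one_or_neg_one]
  lia

lemma even_prime_pow_and_odd_prime_pow_iff {p : ℕ} (hp : p.Prime) (b t : ℕ) :
    Even (p ^ (b + 1 + t)) ∧ Odd (p ^ t) ↔ p = 2 ∧ t = 0 := by
  rw [Nat.even_pow, ← Nat.not_even_iff_odd, Nat.even_pow, hp.even_iff]
  lia

lemma even_mul_and_odd_mul_div_mul_iff {n₁ n₂ d₁ d₂ : ℕ} (hn : n₁.Coprime n₂) (hd₁ : d₁ ∣ n₁)
    (hd₂ : d₂ ∣ n₂) :
    Even (n₁ * n₂) ∧ Odd (n₁ * n₂ / (d₁ * d₂)) ↔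
      (Even n₁ ∧ Odd (n₁ / d₁)) ∨ (Even n₂ ∧ Odd (n₂ / d₂)) := by
  have odd_div {n d : ℕ} (hd : d ∣ n) (h : Odd n) : Odd (n / d) :=
    h.of_dvd_nat (Nat.div_dvd_of_dvd hd)
  have not_both_even : ¬(Even n₁ ∧ Even n₂) := fun ⟨h₁, h₂⟩ =>
    Nat.not_coprime_of_dvd_of_dvd one_lt_two h₁.two_dvd h₂.two_dvd hn
  have odd_div₁ := odd_div hd₁
  have odd_div₂ := odd_div hd₂
  rw [Nat.mul_div_mul_comm hd₁ hd₂, Nat.even_mul, Nat.odd_mul]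
  rw [← Nat.not_even_iff_odd] at odd_div₁ odd_div₂
  tauto

lemma moebiusRowSum_eq_zero_iff {n d : ℕ} (hn : n ≠ 0) (hd : d ∣ n) :
    moebiusRowSum n d = 0 ↔ Even n ∧ Odd (n / d) := by
  refine dvd_induction_on_coprime
    (P := fun n d => moebiusRowSum n d = 0 ↔ Even n ∧ Odd (n / d)) (fun n hn => ?_)
    (fun p b t hp => ?_) (fun n₁ n₂ d₁ d₂ hn hd₁ hd₂ ih₁ ih₂ => ?_) hn hd
  · rw [moebiusRowSum_one_right, Nat.div_one, ← Nat.not_even_iff_odd]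
    simp [hn]
  · rw [moebiusRowSum_prime_pow_eq_zero_iff hp, Nat.pow_div (by lia) hp.pos,
      Nat.add_sub_cancel_left, even_prime_pow_and_odd_prime_pow_iff hp]
  · rw [moebiusRowSum_mul hn hd₁ hd₂, mul_eq_zero, ih₁, ih₂,
      even_mul_and_odd_mul_div_mul_iff hn hd₁ hd₂]

end Positivity

theorem stmt_11 (n : ℕ) (hn : 1 ≤ n) (d : ℕ) (hd : d ∣ n) :
    (0 ≤ (∑ k ∈ n.divisors, ramanujanSum d k).re ∧
      (∑ k ∈ n.divisors, ramanujanSum d k).im = 0) ∧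
    ((∑ k ∈ n.divisors, ramanujanSum d k) = 0 ↔ Even n ∧ Odd (n / d)) := by
  have hn0 : n ≠ 0 := Nat.one_le_iff_ne_zero.1 hn
  rw [sum_ramanujanSum_eq_moebiusRowSum hd]
  refine ⟨⟨?_, Complex.intCast_im _⟩, ?_⟩
  · exact_mod_cast moebiusRowSum_nonneg hn0 hd
  · rw [Int.cast_eq_zero, moebiusRowSum_eq_zero_iff hn0 hd]
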